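/- arXiv:1104.1409 — 2 statements merged into one kernel-verified Lean document; each statement's English description precedes it below -/
import Mathlib

section
/- (𝒮-splitting of mixed Hodge structures) Let (V, W, F) be a real mixed Hodge structure. Equip gr^W V := ⊕_n gr^W_n V with the weight filtration W_r(gr^W V) := ⊕_{n≤r} gr^W_n V and the Hodge filtration F^j(gr^W V)_ℂ := ⊕_n F^j(gr^W_n V_ℂ) induced from (V,W,F). For a complex vector space U with decreasing filtration F, set F^p(U⊗ℂ[x]) := Σ_{j∈ℤ} F^jU·(x−i)^{p−j}ℂ[x], where (x−i)^mℂ[x] := ℂ[x] for m ≤ 0. Then there exists an isomorphism of ℝ[x]-modules φ : V⊗ℝ[x] → (gr^W V)⊗ℝ[x] such that φ((W_rV)⊗ℝ[x]) = (W_r gr^W V)⊗ℝ[x] for all r, and the complexification of φ carries F^p(V_ℂ⊗ℂ[x]) onto F^p((gr^W V)_ℂ⊗ℂ[x]) for all p. -/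
/-!
The weight filtration `W_ℂ` and the Hodge filtration `F` are two finite filtrations of the complex
vector space `V_ℂ`, so they have a common splitting: an isomorphism `B : (gr^W V)_ℂ ≃ V_ℂ` strictly
compatible with both and inducing the identity on each `gr^W_n` (`exists_complex_splitting`, built
from the filtered sections of `exists_filtered_section`). Usually `B` is not real, but its conjugate
`B̄` also induces the identity on the weight-graded pieces, so `D = B̄ - B` lowers weights.

Over `ℂ[x]` this is repaired by a partition of unity on the affine line. Since `(x - i)^N` and
`(x + i)^N` are coprime, there is `h` divisible by `(x - i)^N` with `h + h̄ = 1` (`exists_poly`).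
Then `T = h̄ B + h B̄ = B + h D` is real. For `N` at least the length of `F`, the term `h D` takes
values in every step of the twisted Hodge filtration that matters (`pow_mem_twistedFil`), so `T`
agrees with `B` as far as the Hodge filtration is concerned, while it differs from `B` by an
operator lowering weights. Hence `T` is bijective and strict for both filtrations
(`bijective_and_strict_of_perturbation`), and `Φ = T⁻¹` is the required isomorphism.
-/

/-!
# STATEMENT 4  (`𝒮`-splitting of mixed Hodge structures)

Every real mixed Hodge structure `(V, W, F)` splits after tensoring with `𝒮 = ℝ[x]`:
there is an `ℝ[x]`-linear isomorphism `φ : V ⊗ ℝ[x] ≅ (gr^W V) ⊗ ℝ[x]` preserving the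
weight filtrations and whose complexification carries the twisted Hodge filtration
`F^p(V_ℂ ⊗ ℂ[x]) = Σ_j F^j V_ℂ · (x−i)^{p−j} ℂ[x]` onto the corresponding filtration
of `(gr^W V)_ℂ ⊗ ℂ[x]`.

Conventions:
* the complexification of a real vector space `U` is `ℂ ⊗[ℝ] U`, with complex
  conjugation acting on the first tensor factor;
* `U ⊗ k[x]` is modelled as finitely supported sequences `ℕ →₀ U` of coefficients;
* `gr^W V = ⊕_n W_n V / W_{n-1} V`;
* the isomorphism `φ` is recorded through its complexification `Φ`, which is required
  to commute with the complex conjugations (this is exactly what it means for `Φ` to be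
  the complexification of a real map), to commute with multiplication by `x`
  (`ℝ[x]`-linearity), and to match the weight and Hodge filtrations.
-/

noncomputable section

open TensorProduct DirectSum Polynomial

variable (V : Type) [AddCommGroup V] [Module ℝ V]

lemma sigma_smul (c : ℂ) (x : ℂ ⊗[ℝ] V) :
    LinearMap.rTensor V Complex.conjAe.toLinearMap (c • x)
      = (starRingEnd ℂ) c • LinearMap.rTensor V Complex.conjAe.toLinearMap x := by
  induction x using TensorProduct.induction_on with
  | zero => simp
  | tmul d v =>
      simp [TensorProduct.smul_tmul', smul_eq_mul, map_mul]
  | add a b ha hb => simp only [smul_add, map_add, ha, hb]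

/-- Complex conjugation on the complexification `ℂ ⊗[ℝ] V`, as a conjugate-linear map. -/
def sigmaC : (ℂ ⊗[ℝ] V) →ₛₗ[starRingEnd ℂ] (ℂ ⊗[ℝ] V) where
  toFun := LinearMap.rTensor V Complex.conjAe.toLinearMap
  map_add' := map_add _
  map_smul' := sigma_smul V

variable {V}

/-- The complex-conjugate filtration: `F̄ = σ⁻¹(F) = σ(F)`. -/
def conjFil (F : Submodule ℂ (ℂ ⊗[ℝ] V)) : Submodule ℂ (ℂ ⊗[ℝ] V) :=
  F.comap (sigmaC V)

/-- The complexification `(W_n V)_ℂ ⊆ V_ℂ` of a real subspace. -/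
def WC (W : ℤ → Submodule ℝ V) (n : ℤ) : Submodule ℂ (ℂ ⊗[ℝ] V) :=
  (W n).baseChange ℂ

/-- The weight-graded piece `gr^W_n V_ℂ = (W_n V)_ℂ / (W_{n-1} V)_ℂ`. -/
abbrev grWC (W : ℤ → Submodule ℝ V) (n : ℤ) :=
  ↥(WC W n) ⧸ (WC W (n - 1)).comap (WC W n).subtype

/-- The filtration induced by a filtration `G` of `V_ℂ` on `gr^W_n V_ℂ`. -/
def grFil (W : ℤ → Submodule ℝ V) (G : ℤ → Submodule ℂ (ℂ ⊗[ℝ] V)) (n p : ℤ) :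
    Submodule ℂ (grWC W n) :=
  (((G p).comap (WC W n).subtype)).map ((WC W (n - 1)).comap (WC W n).subtype).mkQ

/-- `(V, W, F)` is a real mixed Hodge structure: `W` is increasing, exhaustive and
Hausdorff, `F` is decreasing, exhaustive and bounded, and for `p + q ≠ n` the double
graded piece `gr_F^p gr_{F̄}^q gr^W_n V_ℂ` vanishes (opposedness). -/
def IsRealMHS [FiniteDimensional ℝ V] (W : ℤ → Submodule ℝ V)
    (F : ℤ → Submodule ℂ (ℂ ⊗[ℝ] V)) : Prop :=
  Monotone W ∧ (∃ a, W a = ⊥) ∧ (∃ b, W b = ⊤) ∧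
  Antitone F ∧ (∃ p, F p = ⊤) ∧ (∃ q, F q = ⊥) ∧
  ∀ n p q : ℤ, p + q ≠ n →
    grFil W F n p ⊓ grFil W (fun j => conjFil (F j)) n q ≤
      (grFil W F n (p + 1) ⊓ grFil W (fun j => conjFil (F j)) n q) ⊔
        grFil W (fun j => conjFil (F j)) n (q + 1)

/-- The real weight-graded piece `gr^W_n V = W_n V / W_{n-1} V`. -/
abbrev grW (W : ℤ → Submodule ℝ V) (n : ℤ) :=
  ↥(W n) ⧸ (W (n - 1)).comap (W n).subtype

/-- `gr^W V = ⊕_n gr^W_n V`. -/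
abbrev grTot (W : ℤ → Submodule ℝ V) := ⨁ n : ℤ, grW W n

/-- The weight filtration of `gr^W V`:  `W_r (gr^W V) := ⊕_{n ≤ r} gr^W_n V`. -/
def grWFil (W : ℤ → Submodule ℝ V) (r : ℤ) : Submodule ℝ (grTot W) :=
  ⨆ (n : ℤ) (_ : n ≤ r), LinearMap.range (DirectSum.lof ℝ ℤ (grW W) n)

/-- The Hodge filtration induced by `F` on `(gr^W V)_ℂ`:  on the `n`-th graded piece it
is the image of `F^j ∩ (W_n)_ℂ`. -/
def grFFil (W : ℤ → Submodule ℝ V) (F : ℤ → Submodule ℂ (ℂ ⊗[ℝ] V)) (j : ℤ) :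
    Submodule ℂ (ℂ ⊗[ℝ] grTot W) :=
  ⨆ n : ℤ,
    (((F j).comap (LinearMap.baseChange ℂ (W n).subtype)).map
      (LinearMap.baseChange ℂ
        ((DirectSum.lof ℝ ℤ (grW W) n) ∘ₗ ((W (n - 1)).comap (W n).subtype).mkQ)))

section PolynomialSide

variable (U : Type) [AddCommGroup U] [Module ℂ U]

/-- Multiplication by `x ^ k` on `U ⊗ ℂ[x] = ℕ →₀ U`. -/
def shiftMap (k : ℕ) : (ℕ →₀ U) →ₗ[ℂ] (ℕ →₀ U) :=
  Finsupp.lsum ℂ fun n => Finsupp.lsingle (n + k)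

/-- The element `w ⊗ q(x)` of `U ⊗ ℂ[x] = ℕ →₀ U`. -/
def ofPoly (q : Polynomial ℂ) (w : U) : ℕ →₀ U :=
  q.sum fun k c => Finsupp.single k (c • w)

/-- The subspace `S ⊗ ℂ[x]` of `U ⊗ ℂ[x]` determined by a subspace `S ⊆ U`. -/
def coeffSub (S : Submodule ℂ U) : Submodule ℂ (ℕ →₀ U) where
  carrier := {f | ∀ n, f n ∈ S}
  add_mem' := fun hf hg n => by
    simpa [Finsupp.add_apply] using S.add_mem (hf n) (hg n)
  zero_mem' := fun n => by simp
  smul_mem' := fun c f hf n => by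
    simpa [Finsupp.smul_apply] using S.smul_mem c (hf n)

/-- The twisted Hodge filtration `F^p (U ⊗ ℂ[x]) := Σ_j F^j U · (x−i)^{p−j} ℂ[x]`
(with `(x−i)^m ℂ[x] := ℂ[x]` for `m ≤ 0`) attached to a decreasing filtration of `U`. -/
def twistedFil (Ffam : ℤ → Submodule ℂ U) (p : ℤ) : Submodule ℂ (ℕ →₀ U) :=
  ⨆ j : ℤ, Submodule.span ℂ
    {f | ∃ w ∈ Ffam j, ∃ k : ℕ, (p - j : ℤ) ≤ k ∧
      f = ofPoly U ((X - C Complex.I) ^ k) w}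

end PolynomialSide

/-! ### Polynomial modules and twisted filtrations -/

/-- The action of `ℂ[x]` on `U ⊗ ℂ[x] = ℕ →₀ U`, with `x` acting as the shift. -/
def polyAct (U : Type) [AddCommGroup U] [Module ℂ U] : ℂ[X] →ₐ[ℂ] Module.End ℂ (ℕ →₀ U) :=
  Polynomial.aeval (shiftMap U 1)

section Core
variable {U U' : Type} [AddCommGroup U] [Module ℂ U] [AddCommGroup U'] [Module ℂ U']

lemma shiftMap_single (k n : ℕ) (w : U) :
    shiftMap U k (Finsupp.single n w) = Finsupp.single (n + k) w := by
  simp [shiftMap]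

lemma polyAct_X : polyAct U X = shiftMap U 1 := by simp [polyAct]

lemma polyAct_X_pow_single (k n : ℕ) (w : U) :
    polyAct U (X ^ k) (Finsupp.single n w) = Finsupp.single (n + k) w := by
  induction k with
  | zero => simp
  | succ k ih =>
    rw [pow_succ', map_mul, Module.End.mul_apply, ih, polyAct_X, shiftMap_single, add_assoc]

lemma ofPoly_eq (q : ℂ[X]) (w : U) : ofPoly U q w = polyAct U q (Finsupp.single 0 w) := by
  induction q using Polynomial.induction_on' with
  | add p q hp hq =>
    rw [map_add, LinearMap.add_apply, ← hp, ← hq]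
    unfold ofPoly
    exact Polynomial.sum_add_index _ _ _ (by simp) (by simp [add_smul])
  | monomial n a =>
    rw [← C_mul_X_pow_eq_monomial, map_mul, Module.End.mul_apply, polyAct_X_pow_single,
      C_mul_X_pow_eq_monomial]
    unfold ofPoly
    rw [Polynomial.sum_monomial_index _ _ (by simp)]
    simp [polyAct, Module.algebraMap_end_apply]

lemma polyAct_mem {P : Submodule ℂ (ℕ →₀ U)} (hP : ∀ f ∈ P, shiftMap U 1 f ∈ P)
    (q : ℂ[X]) {f : ℕ →₀ U} (hf : f ∈ P) : polyAct U q f ∈ P := by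
  induction q using Polynomial.induction_on with
  | C a => simpa [polyAct, Module.algebraMap_end_apply] using P.smul_mem a hf
  | add p q hp hq => rw [map_add]; exact P.add_mem hp hq
  | monomial n a ih =>
    rw [pow_succ', mul_left_comm, map_mul, Module.End.mul_apply, polyAct_X]
    exact hP _ ih

lemma polyAct_comm {T : (ℕ →₀ U) →ₗ[ℂ] (ℕ →₀ U')}
    (hT : ∀ f, T (shiftMap U 1 f) = shiftMap U' 1 (T f)) (q : ℂ[X]) (f : ℕ →₀ U) :
    T (polyAct U q f) = polyAct U' q (T f) := by
  induction q using Polynomial.induction_on generalizing f with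
  | C a => simp [polyAct, Module.algebraMap_end_apply]
  | add p q hp hq => simp [hp, hq]
  | monomial n a ih =>
    rw [pow_succ, ← mul_assoc, map_mul (polyAct U) _ X, Module.End.mul_apply, ih, polyAct_X, hT,
      map_mul (polyAct U') _ X, Module.End.mul_apply, polyAct_X]

lemma mapRange_shift (A : U →ₗ[ℂ] U') (f : ℕ →₀ U) :
    Finsupp.mapRange.linearMap A (shiftMap U 1 f)
      = shiftMap U' 1 (Finsupp.mapRange.linearMap A f) := by
  induction f using Finsupp.induction_linear with
  | zero => simp
  | add f g hf hg => simp only [map_add, hf, hg]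
  | single n w => simp [shiftMap_single]

lemma shift_coeffSub {S : Submodule ℂ U} {f : ℕ →₀ U} (hf : f ∈ coeffSub U S) :
    shiftMap U 1 f ∈ coeffSub U S := by
  have : f.sum Finsupp.single = f := Finsupp.sum_single f
  rw [← this, Finsupp.sum, map_sum]
  refine Submodule.sum_mem _ fun n _ => ?_
  rw [shiftMap_single]
  intro m
  by_cases h : n + 1 = m
  · subst h; simpa using hf n
  · simp [h]

lemma mapRange_coeffSub (A : U →ₗ[ℂ] U') {S : Submodule ℂ U} {S' : Submodule ℂ U'}
    (hA : ∀ w ∈ S, A w ∈ S') {f : ℕ →₀ U} (hf : f ∈ coeffSub U S) :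
    Finsupp.mapRange.linearMap A f ∈ coeffSub U' S' := fun n => by
  simpa using hA _ (hf n)

/-- The generators `w (x - i)^k` of the twisted filtration, as values of the action. -/
lemma gen_mem (F : ℤ → Submodule ℂ U) {p j : ℤ} {w : U} (hw : w ∈ F j) {k : ℕ}
    (hk : p - j ≤ k) :
    polyAct U ((X - C Complex.I) ^ k) (Finsupp.single 0 w) ∈ twistedFil U F p := by
  unfold twistedFil
  refine Submodule.mem_iSup_of_mem j (Submodule.subset_span ⟨w, hw, k, hk, ?_⟩)
  rw [ofPoly_eq]

lemma twistedFil_le {F : ℤ → Submodule ℂ U} {p : ℤ} {P : Submodule ℂ (ℕ →₀ U)}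
    (h : ∀ j : ℤ, ∀ w ∈ F j, ∀ k : ℕ, p - j ≤ k →
      polyAct U ((X - C Complex.I) ^ k) (Finsupp.single 0 w) ∈ P) :
    twistedFil U F p ≤ P := by
  unfold twistedFil
  refine iSup_le fun j => Submodule.span_le.2 ?_
  rintro _ ⟨w, hw, k, hk, rfl⟩
  rw [ofPoly_eq]
  exact h j w hw k hk

/-- `F^p (U ⊗ ℂ[x])`, defined as a complex span, is a `ℂ[x]`-submodule, because
`x (x - i)^k = (x - i)^(k+1) + i (x - i)^k`. -/
lemma twistedFil_shift (F : ℤ → Submodule ℂ U) (p : ℤ) (f : ℕ →₀ U)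
    (hf : f ∈ twistedFil U F p) : shiftMap U 1 f ∈ twistedFil U F p := by
  revert f
  change twistedFil U F p ≤ (twistedFil U F p).comap (shiftMap U 1)
  refine twistedFil_le fun j w hw k hk => ?_
  have h : (X : ℂ[X]) * (X - C Complex.I) ^ k
      = (X - C Complex.I) ^ (k + 1) + C Complex.I * (X - C Complex.I) ^ k := by ring
  rw [Submodule.mem_comap, ← polyAct_X, ← Module.End.mul_apply, ← map_mul, h, map_add, map_mul]
  refine Submodule.add_mem _ (gen_mem F hw (by push_cast; omega)) ?_
  have := Submodule.smul_mem _ Complex.I (gen_mem F hw hk)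
  simpa [polyAct, Module.algebraMap_end_apply] using this

lemma twistedFil_pow (F : ℤ → Submodule ℂ U) {p j : ℤ} {k : ℕ} (hk : p - j ≤ k)
    {f : ℕ →₀ U} (hf : f ∈ twistedFil U F j) :
    polyAct U ((X - C Complex.I) ^ k) f ∈ twistedFil U F p := by
  revert f
  change twistedFil U F j ≤ (twistedFil U F p).comap (polyAct U ((X - C Complex.I) ^ k))
  refine twistedFil_le fun l w hw m hm => ?_
  rw [Submodule.mem_comap, ← Module.End.mul_apply, ← map_mul, ← pow_add]
  exact gen_mem F hw (by push_cast; omega)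

/-- If `F^{p₀} = U`, then `(x - i)^N U[x]` lies in `F^j` as soon as `j - p₀ ≤ N`. This is what
makes corrections divisible by a high power of `x - i` harmless for the Hodge filtration. -/
lemma pow_mem_twistedFil (F : ℤ → Submodule ℂ U) {p₀ j : ℤ} (h₀ : F p₀ = ⊤) {N : ℕ}
    (hN : j - p₀ ≤ N) (f : ℕ →₀ U) :
    polyAct U ((X - C Complex.I) ^ N) f ∈ twistedFil U F j := by
  induction f using Finsupp.induction_linear with
  | zero => simp
  | add f g hf hg => rw [map_add]; exact Submodule.add_mem _ hf hg
  | single n w =>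
    have h := polyAct_X_pow_single n 0 w
    rw [zero_add] at h
    rw [← h, ← Module.End.mul_apply, ← map_mul, mul_comm, map_mul, Module.End.mul_apply]
    exact polyAct_mem (twistedFil_shift F j) _ (gen_mem F (by rw [h₀]; trivial) hN)

/-- A `ℂ[x]`-linear map preserves the twisted filtrations if it does so on the constant
elements. -/
lemma map_twistedFil {F : ℤ → Submodule ℂ U} {F' : ℤ → Submodule ℂ U'}
    {T : (ℕ →₀ U) →ₗ[ℂ] (ℕ →₀ U')} (hT : ∀ f, T (shiftMap U 1 f) = shiftMap U' 1 (T f))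
    (h : ∀ j, ∀ w ∈ F j, T (Finsupp.single 0 w) ∈ twistedFil U' F' j) (p : ℤ) :
    (twistedFil U F p).map T ≤ twistedFil U' F' p := by
  rw [Submodule.map_le_iff_le_comap]
  refine twistedFil_le fun j w hw k hk => ?_
  rw [Submodule.mem_comap, polyAct_comm hT]
  exact twistedFil_pow F' hk (h j w hw)

/-- Let `B` be an isomorphism strictly compatible with finite filtrations `L` (weight) and `F`
(Hodge), let `D` lower the weight by one, and let `h` be divisible by a power of `x - i` at least
the length of `F`. Then `T = B + h D` is a `ℂ[x]`-linear isomorphism that is still strictly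
compatible with the weight and the twisted Hodge filtrations. -/
theorem bijective_and_strict_of_perturbation
    (L : ℤ → Submodule ℂ U) (L' : ℤ → Submodule ℂ U') {a b : ℤ}
    (ha : L a = ⊥) (hb : L b = ⊤) (ha' : L' a = ⊥) (hb' : L' b = ⊤)
    (hL : Monotone L) (hL' : Monotone L')
    (F : ℤ → Submodule ℂ U) (F' : ℤ → Submodule ℂ U') {p₀ q₀ : ℤ}
    (hF : Antitone F) (hF' : Antitone F')
    (hp : F p₀ = ⊤) (hp' : F' p₀ = ⊤) (hq : F q₀ = ⊥) (hq' : F' q₀ = ⊥)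
    {N : ℕ} (hN : q₀ - p₀ ≤ N) (B : U ≃ₗ[ℂ] U')
    (hBL : ∀ r w, B w ∈ L' r ↔ w ∈ L r) (hBF : ∀ j w, B w ∈ F' j ↔ w ∈ F j)
    (D : U →ₗ[ℂ] U') (hD : ∀ r, ∀ w ∈ L r, D w ∈ L' (r - 1))
    (h : ℂ[X]) (hh : (X - C Complex.I) ^ N ∣ h)
    (T : (ℕ →₀ U) →ₗ[ℂ] (ℕ →₀ U'))
    (hT : T = Finsupp.mapRange.linearMap B.toLinearMap
      + (polyAct U' h) ∘ₗ Finsupp.mapRange.linearMap D) :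
    Function.Bijective T ∧ (∀ f, T (shiftMap U 1 f) = shiftMap U' 1 (T f)) ∧
    (∀ r, (coeffSub U (L r)).map T = coeffSub U' (L' r)) ∧
    (∀ p, (twistedFil U F p).map T = twistedFil U' F' p) := by
  obtain ⟨e, rfl⟩ := hh
  have hTa : ∀ f, T f = Finsupp.mapRange.linearMap B.toLinearMap f
      + polyAct U' ((X - C Complex.I) ^ N * e) (Finsupp.mapRange.linearMap D f) := by
    intro f; rw [hT]; rfl
  have hshift : ∀ f, T (shiftMap U 1 f) = shiftMap U' 1 (T f) := by
    intro f
    rw [hTa, hTa, map_add, mapRange_shift, mapRange_shift, ← polyAct_X, ← Module.End.mul_apply,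
      ← Module.End.mul_apply, ← map_mul, ← map_mul, mul_comm X]
  have hDr : ∀ r, ∀ f ∈ coeffSub U (L r),
      polyAct U' ((X - C Complex.I) ^ N * e) (Finsupp.mapRange.linearMap D f)
        ∈ coeffSub U' (L' (r - 1)) := fun r f hf =>
    polyAct_mem (fun f => shift_coeffSub) _ (mapRange_coeffSub D (hD r) hf)
  have hBs : ∀ f : ℕ →₀ U', Finsupp.mapRange.linearMap B.toLinearMap
      (Finsupp.mapRange.linearMap B.symm.toLinearMap f) = f := by
    intro f; ext n; simp
  have hsB : ∀ f : ℕ →₀ U, Finsupp.mapRange.linearMap B.symm.toLinearMap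
      (Finsupp.mapRange.linearMap B.toLinearMap f) = f := by
    intro f; ext n; simp
  have hsymmL : ∀ r, ∀ w ∈ L' r, B.symm w ∈ L r := fun r w hw => by
    rw [← hBL]; simpa using hw
  have hsymmF : ∀ r, ∀ w ∈ F' r, B.symm w ∈ F r := fun r w hw => by
    rw [← hBF]; simpa using hw
  have hle : ∀ r, ∀ f ∈ coeffSub U (L r), T f ∈ coeffSub U' (L' r) := fun r f hf => by
    rw [hTa]
    refine Submodule.add_mem _ (mapRange_coeffSub _ (fun w hw => (hBL r w).2 hw) hf) ?_
    exact fun n => hL' (by omega) (hDr r f hf n)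
  have hge : ∀ r, a ≤ r → coeffSub U' (L' r) ≤ (coeffSub U (L r)).map T := by
    intro r har
    induction r, har using Int.leInduction with
    | base =>
      intro f hf
      have : f = 0 := by
        ext n
        simpa [ha'] using hf n
      rw [this]; exact Submodule.zero_mem _
    | succ r har ih =>
      intro f hf
      have hg := mapRange_coeffSub B.symm.toLinearMap (hsymmL (r + 1)) hf
      have hd := hDr _ _ hg
      rw [add_sub_cancel_right] at hd
      obtain ⟨g, hg', hgT⟩ := ih hd
      refine ⟨Finsupp.mapRange.linearMap B.symm.toLinearMap f - g,
        Submodule.sub_mem _ hg (fun n => hL (by omega) (hg' n)), ?_⟩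
      rw [map_sub, hgT, hTa, hBs]
      abel
  have hmapL : ∀ r, (coeffSub U (L r)).map T = coeffSub U' (L' r) := by
    intro r
    refine le_antisymm (Submodule.map_le_iff_le_comap.2 (hle r)) ?_
    rcases le_total a r with har | har
    · exact hge r har
    · intro f hf
      have : f = 0 := by
        ext n
        have := hL' har (hf n)
        simpa [ha'] using this
      rw [this]; exact Submodule.zero_mem _
  have hsurj : Function.Surjective T := by
    intro f
    have hf : f ∈ coeffSub U' (L' b) := fun n => by rw [hb']; trivial
    rw [← hmapL] at hf
    obtain ⟨g, -, hg⟩ := hf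
    exact ⟨g, hg⟩
  -- An element of the kernel satisfies `B f = - h D f`, so its weight can be lowered forever.
  have hker : ∀ f, T f = 0 → ∀ k : ℕ, f ∈ coeffSub U (L (b - k)) := by
    intro f hf k
    induction k with
    | zero => intro n; simp [hb]
    | succ k ih =>
      have hd := hDr _ _ ih
      have h1 : Finsupp.mapRange.linearMap B.toLinearMap f ∈ coeffSub U' (L' (b - k - 1)) := by
        rw [hTa] at hf
        rw [eq_neg_of_add_eq_zero_left hf]
        exact Submodule.neg_mem _ hd
      have h2 := mapRange_coeffSub B.symm.toLinearMap (hsymmL _) h1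
      rw [hsB] at h2
      convert h2 using 3
      push_cast; ring
  have hinj : Function.Injective T := by
    refine (injective_iff_map_eq_zero T).2 fun f hf => ?_
    ext n
    have := hL (show b - ((b - a).toNat : ℕ) ≤ a by omega) (hker f hf (b - a).toNat n)
    simpa [ha] using this
  refine ⟨⟨hinj, hsurj⟩, hshift, hmapL, fun p => le_antisymm ?_ ?_⟩
  · refine map_twistedFil hshift (fun j w hw => ?_) p
    -- Beyond `q₀` the power of `x - i` need not suffice, but there `F j = ⊥`.
    by_cases hj : j ≤ q₀
    · rw [hTa]
      refine Submodule.add_mem _ ?_ ?_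
      · have := gen_mem F' (p := j) (k := 0) ((hBF j w).2 hw) (by simp)
        simpa using this
      · rw [map_mul, Module.End.mul_apply]
        exact pow_mem_twistedFil F' hp' (by omega) _
    · have : w = 0 := by
        have := hF (by omega : q₀ ≤ j) hw
        simpa [hq] using this
      simp [this]
  · let E := LinearEquiv.ofBijective T ⟨hinj, hsurj⟩
    have hE : ∀ f, T (E.symm f) = f := fun f => E.apply_symm_apply f
    have hEs : ∀ f, E.symm (shiftMap U' 1 f) = shiftMap U 1 (E.symm f) := fun f => by
      apply hinj
      rw [hE, hshift, hE]
    have key := map_twistedFil (F := F') (F' := F) (T := E.symm.toLinearMap) hEs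
      (fun j w hw => ?_) p
    · intro f hf
      exact ⟨E.symm f, key ⟨f, hf, rfl⟩, hE f⟩
    · by_cases hj : j ≤ q₀
      -- Solving `B z + h D z = w` gives `z = B⁻¹ w - h B⁻¹ D z`, whose last term is in `F^j`.
      · have h1 := hE (Finsupp.single 0 w)
        rw [hTa, ← eq_sub_iff_add_eq] at h1
        have h2 := congrArg (Finsupp.mapRange.linearMap B.symm.toLinearMap) h1
        rw [hsB] at h2
        change E.symm _ ∈ _
        rw [h2, map_sub, polyAct_comm (mapRange_shift _), map_mul, Module.End.mul_apply]
        refine Submodule.sub_mem _ ?_ (pow_mem_twistedFil F hp (by omega) _)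
        have := gen_mem F (p := j) (k := 0) (hsymmF j w hw) (by simp)
        simpa using this
      · have : w = 0 := by
          have := hF' (by omega : q₀ ≤ j) hw
          simpa [hq'] using this
        simp [this]

/-- By the Chinese remainder theorem for `(x - i)^N` and `(x + i)^N` there is `h` with
`h ≡ 0` modulo `(x - i)^N` and `h + h̄ = 1`. -/
lemma exists_poly (N : ℕ) : ∃ h : ℂ[X], (X - C Complex.I) ^ N ∣ h ∧
    h + h.map (starRingEnd ℂ) = 1 := by
  have hc : IsCoprime ((X - C Complex.I) ^ N : ℂ[X]) ((X - C (-Complex.I)) ^ N) := by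
    refine IsCoprime.pow (Polynomial.isCoprime_X_sub_C_of_isUnit_sub ?_)
    rw [isUnit_iff_ne_zero, sub_neg_eq_add, ← two_mul]
    simp
  obtain ⟨u, v, huv⟩ := hc
  have huv' := congrArg (Polynomial.map (starRingEnd ℂ)) huv
  simp only [Polynomial.map_add, Polynomial.map_mul, Polynomial.map_pow, Polynomial.map_sub,
    map_X, map_C, Complex.conj_I, map_neg, Polynomial.map_neg, Polynomial.map_one] at huv'
  -- Averaging `u (x - i)^N` with the conjugate of `v (x + i)^N` makes `h + h̄ = 1` hold.
  refine ⟨C (1 / 2) * (u + v.map (starRingEnd ℂ)) * (X - C Complex.I) ^ N, Dvd.intro_left _ rfl, ?_⟩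
  have hvv : (v.map (starRingEnd ℂ)).map (starRingEnd ℂ) = v := by
    ext n; simp
  have h2 : (C (1 / 2) : ℂ[X]) * 2 = 1 := by
    have : (2 : ℂ[X]) = C 2 := rfl
    rw [this, ← C_mul]; norm_num
  have h3 : (starRingEnd ℂ) (1 / 2) = 1 / 2 := by
    rw [map_div₀, map_one, map_ofNat]
  simp only [Polynomial.map_add, Polynomial.map_mul, Polynomial.map_pow, Polynomial.map_sub,
    map_X, map_C, Complex.conj_I, h3, hvv]
  simp only [map_neg] at huv ⊢
  linear_combination C (1 / 2) * huv + C (1 / 2) * huv' + h2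

/-- A surjection of vector spaces has a linear section compatible with a given finite filtration
of the source and its image in the target. -/
lemma exists_filtered_section {Q : Type} [AddCommGroup Q] [Module ℂ Q] (π : U →ₗ[ℂ] Q)
    (G : ℤ → Submodule ℂ U) (hG : Antitone G) {p₀ q₀ : ℤ} (hp : G p₀ = ⊤) (hq : G q₀ = ⊥)
    (hπ : Function.Surjective π) :
    ∃ s : Q →ₗ[ℂ] U, (∀ y, π (s y) = y) ∧ ∀ p, ∀ u ∈ G p, s (π u) ∈ G p := by
  -- Descending induction on the filtration: the section is only required to be one on the image
  -- of `G p` for `p ≥ q₀ - k`.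
  have key : ∀ k : ℕ, ∃ s : Q →ₗ[ℂ] U, ∀ p, q₀ - k ≤ p → ∀ u ∈ G p,
      s (π u) ∈ G p ∧ π (s (π u)) = π u := by
    intro k
    induction k with
    | zero =>
      refine ⟨0, fun p hp u hu => ?_⟩
      have : u = 0 := by
        have := hG (by simpa using hp : q₀ ≤ p) hu
        simpa [hq] using this
      simp [this]
    | succ k ih =>
      obtain ⟨s, hs⟩ := ih
      set m : ℤ := q₀ - (k + 1 : ℕ) with hm
      -- `P` projects onto the image of `G (m + 1)` and `R` onto that of `G m`; `t` is a section of
      -- `π` on `G m`. The old section is kept on the range of `P`, and `t` is used on its kernel.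
      obtain ⟨P, hP⟩ := ((G (m + 1)).map π).subtype.exists_leftInverse_of_injective
        (Submodule.ker_subtype _)
      obtain ⟨R, hR⟩ := ((G m).map π).subtype.exists_leftInverse_of_injective
        (Submodule.ker_subtype _)
      obtain ⟨t, ht⟩ := ((π.submoduleMap (G m))).exists_rightInverse_of_surjective
        (LinearMap.range_eq_top.2 (π.submoduleMap_surjective (G m)))
      have hP' : ∀ y (hy : y ∈ (G (m + 1)).map π), P y = ⟨y, hy⟩ := fun y hy =>
        LinearMap.congr_fun hP ⟨y, hy⟩
      have hR' : ∀ y (hy : y ∈ (G m).map π), R y = ⟨y, hy⟩ := fun y hy =>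
        LinearMap.congr_fun hR ⟨y, hy⟩
      have ht' : ∀ y, π (t y) = y := fun y => congrArg Subtype.val (LinearMap.congr_fun ht y)
      let P' : Q →ₗ[ℂ] Q := ((G (m + 1)).map π).subtype ∘ₗ P
      refine ⟨s ∘ₗ P' + (G m).subtype ∘ₗ t ∘ₗ R ∘ₗ (LinearMap.id - P'), fun p hp u hu => ?_⟩
      rcases eq_or_lt_of_le hp with rfl | hlt
      · obtain ⟨u', hu', hu'e⟩ := (P (π u)).2
        have hP'u : P' (π u) = π u' := hu'e.symm
        have hs' := hs (m + 1) (by push_cast at hm; omega) u' hu'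
        have hmem : π u - π u' ∈ (G m).map π :=
          ⟨u - u', Submodule.sub_mem _ hu (hG (by omega) hu'), map_sub _ _ _⟩
        simp only [LinearMap.add_apply, LinearMap.comp_apply, LinearMap.sub_apply,
          LinearMap.id_apply, hP'u, hR' _ hmem, Submodule.subtype_apply]
        refine ⟨Submodule.add_mem _ (hG (by omega) hs'.1) (Submodule.coe_mem _), ?_⟩
        rw [map_add, hs'.2, ht']
        simp
      · have hP'u : P' (π u) = π u := by
          have := hP' (π u) ⟨u, hG (by omega) hu, rfl⟩
          simp [P', this]
        have hs' := hs p (by push_cast at hm; omega) u hu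
        simp only [LinearMap.add_apply, LinearMap.comp_apply, LinearMap.sub_apply,
          LinearMap.id_apply, hP'u, sub_self, map_zero, add_zero]
        exact hs'
  obtain ⟨s₀, hs₀⟩ := key (q₀ - p₀).toNat
  refine ⟨s₀, fun y => ?_, fun p u hu => ?_⟩
  · obtain ⟨u, rfl⟩ := hπ y
    exact (hs₀ p₀ (by omega) u (by rw [hp]; trivial)).2
  · rcases le_total p₀ p with h | h
    · exact (hs₀ p (by omega) u hu).1
    · have : G p = ⊤ := top_le_iff.1 (hp ▸ hG h)
      rw [this]; trivial

end Core

/-! ### Complex conjugation -/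

section Conj

lemma sigmaC_sigmaC {V : Type} [AddCommGroup V] [Module ℝ V] (x : ℂ ⊗[ℝ] V) :
    sigmaC V (sigmaC V x) = x := by
  change LinearMap.rTensor V Complex.conjAe.toLinearMap
    (LinearMap.rTensor V Complex.conjAe.toLinearMap x) = x
  induction x using TensorProduct.induction_on with
  | zero => simp
  | tmul d v => simp
  | add a b ha hb => simp only [map_add, ha, hb]

lemma sigmaC_baseChange {V V' : Type} [AddCommGroup V] [Module ℝ V] [AddCommGroup V']
    [Module ℝ V'] (f : V →ₗ[ℝ] V') (x : ℂ ⊗[ℝ] V) :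
    sigmaC V' (f.baseChange ℂ x) = f.baseChange ℂ (sigmaC V x) := by
  change LinearMap.rTensor V' Complex.conjAe.toLinearMap (f.baseChange ℂ x)
    = f.baseChange ℂ (LinearMap.rTensor V Complex.conjAe.toLinearMap x)
  induction x using TensorProduct.induction_on with
  | zero => simp
  | tmul d v => simp
  | add a b ha hb => simp only [map_add, ha, hb]

/-- Coefficientwise complex conjugation on `V_ℂ ⊗ ℂ[x]`, so that `x` is real. -/
def sigmaX (V : Type) [AddCommGroup V] [Module ℝ V] :
    (ℕ →₀ (ℂ ⊗[ℝ] V)) →ₗ[ℝ] (ℕ →₀ (ℂ ⊗[ℝ] V)) :=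
  Finsupp.mapRange.linearMap (LinearMap.rTensor V Complex.conjAe.toLinearMap)

lemma sigmaX_apply {V : Type} [AddCommGroup V] [Module ℝ V] (f : ℕ →₀ (ℂ ⊗[ℝ] V)) (n : ℕ) :
    sigmaX V f n = sigmaC V (f n) := by
  simp [sigmaX]; rfl

lemma sigmaX_shift {V : Type} [AddCommGroup V] [Module ℝ V] (f : ℕ →₀ (ℂ ⊗[ℝ] V)) :
    sigmaX V (shiftMap _ 1 f) = shiftMap _ 1 (sigmaX V f) := by
  induction f using Finsupp.induction_linear with
  | zero => simp
  | add f g hf hg => simp only [map_add, hf, hg]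
  | single n w => simp [shiftMap_single, sigmaX]

lemma sigmaX_polyAct {V : Type} [AddCommGroup V] [Module ℝ V] (q : ℂ[X])
    (f : ℕ →₀ (ℂ ⊗[ℝ] V)) :
    sigmaX V (polyAct _ q f) = polyAct _ (q.map (starRingEnd ℂ)) (sigmaX V f) := by
  induction q using Polynomial.induction_on generalizing f with
  | C a =>
    ext n
    simp [polyAct, Module.algebraMap_end_apply, sigmaX_apply]
  | add p q hp hq => simp [hp, hq]
  | monomial n a ih =>
    rw [pow_succ, ← mul_assoc, map_mul (polyAct _) _ X, Module.End.mul_apply, ih, polyAct_X,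
      sigmaX_shift, Polynomial.map_mul (q := X), Polynomial.map_X, map_mul (polyAct _) _ X,
      Module.End.mul_apply, polyAct_X]

end Conj

/-! ### Simultaneous complex splitting of the weight and Hodge filtrations -/

section Splitting
variable {V : Type} [AddCommGroup V] [Module ℝ V]

/-- The complexified inclusion `(W_n)_ℂ → V_ℂ`, with source `ℂ ⊗ W_n` rather than its image
`WC W n`. -/
def inclC (W : ℤ → Submodule ℝ V) (n : ℤ) : (ℂ ⊗[ℝ] W n) →ₗ[ℂ] (ℂ ⊗[ℝ] V) :=
  LinearMap.baseChange ℂ (W n).subtype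

/-- The complexified projection `(W_n)_ℂ → (gr^W_n)_ℂ`. -/
def projC (W : ℤ → Submodule ℝ V) (n : ℤ) : (ℂ ⊗[ℝ] W n) →ₗ[ℂ] (ℂ ⊗[ℝ] grW W n) :=
  LinearMap.baseChange ℂ ((W (n - 1)).comap (W n).subtype).mkQ

/-- The canonical map `(W_n)_ℂ → (gr^W_n)_ℂ ⊆ (gr^W V)_ℂ`. -/
def grMap (W : ℤ → Submodule ℝ V) (n : ℤ) : (ℂ ⊗[ℝ] W n) →ₗ[ℂ] (ℂ ⊗[ℝ] grTot W) :=
  LinearMap.baseChange ℂ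
    ((DirectSum.lof ℝ ℤ (grW W) n) ∘ₗ ((W (n - 1)).comap (W n).subtype).mkQ)

variable {W : ℤ → Submodule ℝ V}

lemma grMap_eq (n : ℤ) (u : ℂ ⊗[ℝ] W n) :
    grMap W n u = (DirectSum.lof ℝ ℤ (grW W) n).baseChange ℂ (projC W n u) := by
  rw [grMap, LinearMap.baseChange_comp]; rfl

lemma mem_WC_iff {n : ℤ} {v : ℂ ⊗[ℝ] V} : v ∈ WC W n ↔ ∃ u, inclC W n u = v := Iff.rfl

lemma WC_mono (hW : Monotone W) : Monotone (WC W) := fun _ _ h => Submodule.baseChange_mono _ (hW h)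

lemma sigmaC_mem_WC {n : ℤ} {v : ℂ ⊗[ℝ] V} (hv : v ∈ WC W n) : sigmaC V v ∈ WC W n := by
  obtain ⟨u, rfl⟩ := mem_WC_iff.1 hv
  exact mem_WC_iff.2 ⟨sigmaC _ u, (sigmaC_baseChange _ _).symm⟩

lemma inclC_injective (n : ℤ) : Function.Injective (inclC W n) :=
  Module.Flat.lTensor_preserves_injective_linearMap (M := ℂ) (W n).subtype
    (Submodule.subtype_injective _)

lemma projC_surjective (n : ℤ) : Function.Surjective (projC W n) :=
  LinearMap.baseChange_surjective _ (Submodule.mkQ_surjective _)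

lemma projC_eq_zero_iff (hW : Monotone W) {n : ℤ} {u : ℂ ⊗[ℝ] W n} :
    projC W n u = 0 ↔ inclC W n u ∈ WC W (n - 1) := by
  set K := (W (n - 1)).comap (W n).subtype with hK
  constructor
  · intro h
    have hex := lTensor_exact ℂ (LinearMap.exact_subtype_mkQ K) K.mkQ_surjective
    obtain ⟨z, rfl⟩ := (hex u).1 h
    let g : K →ₗ[ℝ] W (n - 1) := ((W n).subtype ∘ₗ K.subtype).codRestrict _ fun x => x.2
    refine mem_WC_iff.2 ⟨g.baseChange ℂ z, ?_⟩
    have h1 : (W (n - 1)).subtype ∘ₗ g = (W n).subtype ∘ₗ K.subtype := rfl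
    have h2 := congrArg (LinearMap.baseChange ℂ) h1
    rw [LinearMap.baseChange_comp, LinearMap.baseChange_comp] at h2
    exact LinearMap.congr_fun h2 z
  · intro h
    obtain ⟨z, hz⟩ := mem_WC_iff.1 h
    let i := Submodule.inclusion (hW (by omega : n - 1 ≤ n))
    have h1 : (W n).subtype ∘ₗ i = (W (n - 1)).subtype := rfl
    have h2 := congrArg (LinearMap.baseChange ℂ) h1
    rw [LinearMap.baseChange_comp] at h2
    have h3 : i.baseChange ℂ z = u := inclC_injective n ((LinearMap.congr_fun h2 z).trans hz)
    have h4 : K.mkQ ∘ₗ i = 0 := by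
      ext x
      simp [hK, i]
    have h5 := congrArg (LinearMap.baseChange ℂ) h4
    rw [LinearMap.baseChange_comp, LinearMap.baseChange_zero] at h5
    rw [← h3]
    exact LinearMap.congr_fun h5 z

lemma baseChange_grWFil (r : ℤ) :
    (grWFil W r).baseChange ℂ = ⨆ (n : ℤ) (_ : n ≤ r), LinearMap.range (grMap W n) := by
  apply le_antisymm
  · rw [Submodule.baseChange_eq_span, Submodule.span_le]
    have : grWFil W r ≤ ((⨆ (n : ℤ) (_ : n ≤ r), LinearMap.range (grMap W n)).restrictScalars
        ℝ).comap (TensorProduct.mk ℝ ℂ (grTot W) 1) := by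
      unfold grWFil
      refine iSup₂_le fun n hn => ?_
      rintro _ ⟨y, rfl⟩
      obtain ⟨y, rfl⟩ := Submodule.mkQ_surjective _ y
      refine Submodule.mem_iSup_of_mem n (Submodule.mem_iSup_of_mem hn ⟨1 ⊗ₜ y, ?_⟩)
      simp [grMap]
    rintro _ ⟨m, hm, rfl⟩
    exact this hm
  · refine iSup₂_le fun n hn => ?_
    rintro _ ⟨u, rfl⟩
    induction u using TensorProduct.induction_on with
    | zero => simp
    | add x y hx hy => rw [map_add]; exact Submodule.add_mem _ hx hy
    | tmul c w =>
      rw [grMap, LinearMap.baseChange_tmul]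
      refine Submodule.tmul_mem_baseChange_of_mem _ ?_
      exact Submodule.mem_iSup_of_mem n (Submodule.mem_iSup_of_mem hn ⟨_, rfl⟩)

lemma grMap_mem {n r : ℤ} (hn : n ≤ r) (u : ℂ ⊗[ℝ] W n) :
    grMap W n u ∈ (grWFil W r).baseChange ℂ := by
  rw [baseChange_grWFil]
  exact Submodule.mem_iSup_of_mem n (Submodule.mem_iSup_of_mem hn ⟨u, rfl⟩)

lemma grWFil_step {r : ℤ} {w : ℂ ⊗[ℝ] grTot W} (hw : w ∈ (grWFil W r).baseChange ℂ) :
    ∃ u, w - grMap W r u ∈ (grWFil W (r - 1)).baseChange ℂ := by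
  have h : (grWFil W r).baseChange ℂ
      ≤ LinearMap.range (grMap W r) ⊔ (grWFil W (r - 1)).baseChange ℂ := by
    rw [baseChange_grWFil]
    refine iSup₂_le fun n hn => ?_
    rcases eq_or_lt_of_le hn with rfl | hlt
    · exact le_sup_left
    · refine le_trans ?_ le_sup_right
      rintro _ ⟨u, rfl⟩
      exact grMap_mem (by omega) u
  obtain ⟨_, ⟨u, rfl⟩, z, hz, rfl⟩ := Submodule.mem_sup.1 (h hw)
  exact ⟨u, by simpa using hz⟩

lemma grWFil_mono : Monotone (grWFil W) := fun _ _ h =>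
  iSup₂_le fun n hn => le_iSup₂_of_le n (hn.trans h) le_rfl

lemma grWFil_bot (hW : Monotone W) {a : ℤ} (ha : W a = ⊥) : grWFil W a = ⊥ := by
  refine le_bot_iff.1 (iSup₂_le fun n hn => ?_)
  rintro _ ⟨y, rfl⟩
  obtain ⟨y, rfl⟩ := Submodule.mkQ_surjective _ y
  have hy : y = 0 := by
    have := hW hn y.2
    rw [ha] at this
    exact Subtype.ext this
  simp [hy]

lemma grWFil_top (hW : Monotone W) {b : ℤ} (hb : W b = ⊤) : grWFil W b = ⊤ := by
  refine Submodule.eq_top_iff'.2 fun x => ?_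
  induction x using DirectSum.induction_on with
  | zero => exact Submodule.zero_mem _
  | add x y hx hy => exact Submodule.add_mem _ hx hy
  | of n y =>
    by_cases hn : n ≤ b
    · exact Submodule.mem_iSup_of_mem n (Submodule.mem_iSup_of_mem hn ⟨y, rfl⟩)
    · obtain ⟨y, rfl⟩ := Submodule.mkQ_surjective _ y
      have : ((W (n - 1)).comap (W n).subtype).mkQ y = 0 := by
        rw [Submodule.mkQ_apply, Submodule.Quotient.mk_eq_zero]
        have : W (n - 1) = ⊤ := top_le_iff.1 (hb ▸ hW (by omega))
        simp [this]
      rw [this, map_zero]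
      exact Submodule.zero_mem _

/-- There is a complex isomorphism `(gr^W V)_ℂ ≃ V_ℂ`, inducing the identity on weight-graded pieces
and strictly compatible with the weight and Hodge filtrations: any two finite filtrations of a
vector space admit a common splitting. -/
theorem exists_complex_splitting (hW : Monotone W) {a b : ℤ} (ha : W a = ⊥) (hb : W b = ⊤)
    (F : ℤ → Submodule ℂ (ℂ ⊗[ℝ] V)) (hF : Antitone F) {p₀ q₀ : ℤ}
    (hp : F p₀ = ⊤) (hq : F q₀ = ⊥) :
    ∃ B : (ℂ ⊗[ℝ] grTot W) ≃ₗ[ℂ] (ℂ ⊗[ℝ] V),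
      (∀ r w, B w ∈ WC W r ↔ w ∈ (grWFil W r).baseChange ℂ) ∧
      (∀ j w, B w ∈ F j ↔ w ∈ grFFil W F j) ∧
      (∀ n u, B (grMap W n u) - inclC W n u ∈ WC W (n - 1)) := by
  have hs : ∀ n, ∃ s : (ℂ ⊗[ℝ] grW W n) →ₗ[ℂ] (ℂ ⊗[ℝ] W n), (∀ y, projC W n (s y) = y) ∧
      ∀ p, ∀ u ∈ (F p).comap (inclC W n), s (projC W n u) ∈ (F p).comap (inclC W n) := fun n =>
    exists_filtered_section (projC W n) (fun p => (F p).comap (inclC W n))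
      (fun _ _ h => Submodule.comap_mono (hF h)) (p₀ := p₀) (q₀ := q₀) (by simp [hp])
      (by simpa [hq] using LinearMap.ker_eq_bot.2 (inclC_injective n)) (projC_surjective n)
  choose s hs1 hs2 using hs
  let B : (ℂ ⊗[ℝ] grTot W) →ₗ[ℂ] (ℂ ⊗[ℝ] V) :=
    DirectSum.toModule ℂ ℤ _ (fun n => inclC W n ∘ₗ s n) ∘ₗ
      (TensorProduct.directSumRight ℝ ℂ ℂ (grW W)).toLinearMap
  have hBlof : ∀ n y, B ((DirectSum.lof ℝ ℤ (grW W) n).baseChange ℂ y) = inclC W n (s n y) := by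
    intro n y
    induction y using TensorProduct.induction_on with
    | zero => simp
    | add x y hx hy => simp only [map_add, hx, hy]
    | tmul c w =>
      simp only [B, LinearMap.comp_apply, LinearMap.baseChange_tmul, LinearEquiv.coe_coe,
        TensorProduct.directSumRight_tmul_lof, DirectSum.toModule_lof]
  have hBgr : ∀ n u, B (grMap W n u) = inclC W n (s n (projC W n u)) := fun n u => by
    rw [grMap_eq, hBlof]
  have hdiff : ∀ n u, B (grMap W n u) - inclC W n u ∈ WC W (n - 1) := fun n u => by
    rw [hBgr, ← map_sub, ← projC_eq_zero_iff hW, map_sub, hs1, sub_self]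
  have hBW : ∀ r, ∀ w ∈ (grWFil W r).baseChange ℂ, B w ∈ WC W r := by
    intro r
    change _ ≤ (WC W r).comap B
    rw [baseChange_grWFil]
    refine iSup₂_le fun n hn => ?_
    rintro _ ⟨u, rfl⟩
    rw [Submodule.mem_comap, hBgr]
    exact WC_mono hW hn (mem_WC_iff.2 ⟨_, rfl⟩)
  have hBF : ∀ j, ∀ w ∈ grFFil W F j, B w ∈ F j := by
    intro j
    change _ ≤ (F j).comap B
    refine iSup_le fun n => ?_
    rintro _ ⟨u, hu, rfl⟩
    change B (grMap W n u) ∈ F j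
    rw [hBgr]
    exact hs2 n j u hu
  have hWa : ∀ r ≤ a, ∀ v ∈ WC W r, v = 0 := fun r hr v hv => by
    have : WC W a = ⊥ := by simp [WC, ha]
    have := this ▸ WC_mono hW hr hv
    simpa using this
  -- Strictness: `v = ι u` agrees with `B (grMap u)` up to lower weight, within the same `F j`.
  have hlift : ∀ r j v, v ∈ WC W r → v ∈ F j →
      ∃ w, w ∈ (grWFil W r).baseChange ℂ ∧ w ∈ grFFil W F j ∧ B w = v := by
    intro r j
    rcases le_total r a with har | har
    · intro v hv _
      rw [hWa r har v hv]
      exact ⟨0, Submodule.zero_mem _, Submodule.zero_mem _, map_zero _⟩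
    induction r, har using Int.leInduction with
    | base =>
      intro v hv _
      rw [hWa a le_rfl v hv]
      exact ⟨0, Submodule.zero_mem _, Submodule.zero_mem _, map_zero _⟩
    | succ r har ih =>
      intro v hv hvF
      obtain ⟨u, rfl⟩ := mem_WC_iff.1 hv
      have hF' : grMap W (r + 1) u ∈ grFFil W F j := by
        unfold grFFil
        exact Submodule.mem_iSup_of_mem (r + 1) ⟨u, hvF, rfl⟩
      have hd := hdiff (r + 1) u
      rw [add_sub_cancel_right] at hd
      obtain ⟨w, hw, hwF, hwB⟩ := ih _ hd (Submodule.sub_mem _ (hBF j _ hF') hvF)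
      refine ⟨grMap W (r + 1) u - w, Submodule.sub_mem _ (grMap_mem le_rfl u)
        (Submodule.baseChange_mono _ (grWFil_mono (by omega)) hw), Submodule.sub_mem _ hF' hwF, ?_⟩
      rw [map_sub, hwB]; abel
  have hker : ∀ w, B w = 0 → ∀ k : ℕ, w ∈ (grWFil W (b - k)).baseChange ℂ := by
    intro w hw k
    induction k with
    | zero => simp [grWFil_top hW hb]
    | succ k ih =>
      obtain ⟨u, hu⟩ := grWFil_step ih
      have h1 := hBW _ _ hu
      rw [map_sub, hw, zero_sub, Submodule.neg_mem_iff, hBgr, ← projC_eq_zero_iff hW, hs1] at h1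
      rw [grMap_eq, h1, map_zero, sub_zero] at hu
      convert hu using 3
      push_cast; ring
  have hinj : Function.Injective B := by
    refine (injective_iff_map_eq_zero B).2 fun w hw => ?_
    have := Submodule.baseChange_mono ℂ
      (grWFil_mono (show b - ((b - a).toNat : ℕ) ≤ a by omega)) (hker w hw (b - a).toNat)
    simpa [grWFil_bot hW ha] using this
  have hsurj : Function.Surjective B := fun v => by
    obtain ⟨w, -, -, h⟩ := hlift b p₀ v (by simp [WC, hb]) (by rw [hp]; trivial)
    exact ⟨w, h⟩
  refine ⟨LinearEquiv.ofBijective B ⟨hinj, hsurj⟩, fun r w => ⟨fun h => ?_, hBW r w⟩,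
    fun j w => ⟨fun h => ?_, hBF j w⟩, hdiff⟩
  · obtain ⟨w', h1, -, h3⟩ := hlift r p₀ _ h (by rw [hp]; trivial)
    rwa [← hinj h3]
  · obtain ⟨w', -, h2, h3⟩ := hlift b j _ (by simp [WC, hb]) h
    rwa [← hinj h3]

end Splitting

/-! ### The real splitting over the polynomial ring -/

/-- **Statement 4**: every real mixed Hodge structure splits canonically over
`𝒮 = ℝ[x]`:  there is a filtered `ℝ[x]`-linear isomorphism
`V ⊗ ℝ[x] ≅ (gr^W V) ⊗ ℝ[x]`, recorded here via its complexification `Φ`. -/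
theorem mhs_S_splitting
    [FiniteDimensional ℝ V]
    (W : ℤ → Submodule ℝ V) (F : ℤ → Submodule ℂ (ℂ ⊗[ℝ] V))
    (hMHS : IsRealMHS W F) :
    ∃ Φ : (ℕ →₀ (ℂ ⊗[ℝ] V)) ≃ₗ[ℂ] (ℕ →₀ (ℂ ⊗[ℝ] grTot W)),
      -- `Φ` commutes with multiplication by `x`, i.e. is `ℂ[x]`-linear:
      (∀ f, Φ (shiftMap _ 1 f) = shiftMap _ 1 (Φ f)) ∧
      -- `Φ` commutes with the complex conjugations, i.e. is the complexification of a
      -- real (`ℝ[x]`-linear) isomorphism `φ : V ⊗ ℝ[x] ≅ (gr^W V) ⊗ ℝ[x]`: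
      (∀ f, Φ (Finsupp.mapRange.linearMap
                (LinearMap.rTensor V Complex.conjAe.toLinearMap) f)
          = Finsupp.mapRange.linearMap
                (LinearMap.rTensor (grTot W) Complex.conjAe.toLinearMap) (Φ f)) ∧
      -- `φ ((W_r V) ⊗ ℝ[x]) = (W_r gr^W V) ⊗ ℝ[x]` for all `r`:
      (∀ r : ℤ, (coeffSub _ (WC W r)).map Φ.toLinearMap
          = coeffSub _ ((grWFil W r).baseChange ℂ)) ∧
      -- the complexification carries `F^p(V_ℂ ⊗ ℂ[x])` onto `F^p((gr^W V)_ℂ ⊗ ℂ[x])`: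
      (∀ p : ℤ, (twistedFil _ F p).map Φ.toLinearMap
          = twistedFil _ (grFFil W F) p) := by
  obtain ⟨hW, ⟨a, ha⟩, ⟨b, hb⟩, hF, ⟨p₀, hp⟩, ⟨q₀, hq⟩, -⟩ := hMHS
  obtain ⟨B, hBW, hBF, hBd⟩ := exists_complex_splitting hW ha hb F hF hp hq
  obtain ⟨h, hdvd, hsum⟩ := exists_poly (q₀ - p₀).toNat
  let Bbar : (ℂ ⊗[ℝ] grTot W) →ₗ[ℂ] (ℂ ⊗[ℝ] V) :=
    (sigmaC V).comp (B.toLinearMap.comp (sigmaC (grTot W)))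
  let D : (ℂ ⊗[ℝ] grTot W) →ₗ[ℂ] (ℂ ⊗[ℝ] V) := Bbar - B.toLinearMap
  have hDa : ∀ w, D w = sigmaC V (B (sigmaC (grTot W) w)) - B w := fun w => rfl
  have hD : ∀ r, ∀ w ∈ (grWFil W r).baseChange ℂ, D w ∈ WC W (r - 1) := by
    intro r
    change _ ≤ (WC W (r - 1)).comap D
    rw [baseChange_grWFil]
    refine iSup₂_le fun n hn => ?_
    rintro _ ⟨u, rfl⟩
    -- The canonical map is real, so `B̄` is congruent to it modulo lower weight just as `B` is.
    have e : D (grMap W n u) = sigmaC V (B (grMap W n (sigmaC _ u)) - inclC W n (sigmaC _ u))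
        - (B (grMap W n u) - inclC W n u) := by
      have e1 : sigmaC (grTot W) (grMap W n u) = grMap W n (sigmaC _ u) := sigmaC_baseChange _ u
      have e2 : sigmaC V (inclC W n (sigmaC _ u)) = inclC W n u := by
        rw [inclC, sigmaC_baseChange, sigmaC_sigmaC]
      rw [hDa, e1, map_sub, e2]; abel
    rw [Submodule.mem_comap, e]
    exact WC_mono hW (by omega) (Submodule.sub_mem _ (sigmaC_mem_WC (hBd n _)) (hBd n u))
  have hF' : ∀ j, grFFil W F j = (F j).comap B.toLinearMap := fun j => by
    ext w; exact (hBF j w).symm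
  -- `T = B + h (B̄ - B)`; since `h + h̄ = 1` this is `h̄ B + h B̄`, hence real.
  obtain ⟨hbij, hshift, hTW, hTF⟩ :=
    bijective_and_strict_of_perturbation (fun r => (grWFil W r).baseChange ℂ) (WC W) (a := a)
    (b := b) (by simp [grWFil_bot hW ha]) (by simp [grWFil_top hW hb]) (by simp [WC, ha])
    (by simp [WC, hb]) (fun _ _ h => Submodule.baseChange_mono _ (grWFil_mono h)) (WC_mono hW)
    (grFFil W F) F (p₀ := p₀) (q₀ := q₀)
    (fun _ _ h => by rw [hF', hF']; exact Submodule.comap_mono (hF h)) hF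
    (by simp [hF', hp]) hp (by simp [hF', hq]) hq (N := (q₀ - p₀).toNat) (by omega) B
    hBW hBF D hD h hdvd _ rfl
  set T := Finsupp.mapRange.linearMap (α := ℕ) B.toLinearMap
      + (polyAct _ h) ∘ₗ Finsupp.mapRange.linearMap D with hT
  have hTσ : ∀ f, T (sigmaX (grTot W) f) = sigmaX V (T f) := by
    intro f
    have hTa : ∀ f, T f = Finsupp.mapRange.linearMap B.toLinearMap f
      + polyAct _ h (Finsupp.mapRange.linearMap D f) := fun f => rfl
    have e1 : sigmaX V (Finsupp.mapRange.linearMap B.toLinearMap f)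
        = Finsupp.mapRange.linearMap B.toLinearMap (sigmaX (grTot W) f)
          + Finsupp.mapRange.linearMap D (sigmaX (grTot W) f) := by
      ext n
      simp [sigmaX_apply, hDa, sigmaC_sigmaC]
    have e2 : sigmaX V (Finsupp.mapRange.linearMap D f)
        = - Finsupp.mapRange.linearMap D (sigmaX (grTot W) f) := by
      ext n
      simp [sigmaX_apply, hDa, sigmaC_sigmaC]
    have e3 := LinearMap.congr_fun (congrArg (polyAct (ℂ ⊗[ℝ] V)) hsum)
      (Finsupp.mapRange.linearMap D (sigmaX (grTot W) f))
    rw [map_add, map_one, LinearMap.add_apply, Module.End.one_apply] at e3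
    rw [hTa, hTa, map_add, sigmaX_polyAct, e1, e2, map_neg]
    rw [eq_sub_of_add_eq e3]
    abel
  let E := LinearEquiv.ofBijective T hbij
  have hE : ∀ f, T (E.symm f) = f := fun f => E.apply_symm_apply f
  have hmap : ∀ S S', Submodule.map T S = S' → Submodule.map E.symm.toLinearMap S' = S := by
    rintro S _ rfl
    ext f
    constructor
    · rintro ⟨_, ⟨g, hg, rfl⟩, rfl⟩
      have : E.symm (T g) = g := E.symm_apply_apply g
      change E.symm (T g) ∈ S
      rwa [this]
    · intro hf
      exact ⟨T f, ⟨f, hf, rfl⟩, E.symm_apply_apply f⟩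
  refine ⟨E.symm, fun f => hbij.1 ?_, fun f => hbij.1 ?_, fun r => hmap _ _ (hTW r),
    fun p => hmap _ _ (hTF p)⟩
  · rw [hE, hshift, hE]
  · rw [hE]
    exact ((hTσ (E.symm f)).trans (by rw [hE]; rfl)).symm

end
end

section
/- Let (V, β) be an object of SHS, with D_β acting on V_ℂ⊗ℂ[x] as in the context, and for λ ∈ ℂ let ev_λ : ker(D_β) → V_ℂ denote evaluation at λ (each ev_λ is a ℂ-linear isomorphism). Then the automorphism d := ev_{−i} ∘ (ev_i)^{−1} of V_ℂ satisfies σ∘d∘σ = d^{−1} and (d − id)(V^{pq}) ⊆ ⊕_{r<p, s<q} V^{rs} for all p,q; that is, the pair (V, d) is an 𝔐-representation in Deligne's sense. -/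
/-!
The equation `D_β f = 0` reads `f' = -β f`, and Picard iteration solves it by a finite sum.
Let `I_λ` be integration with base point `λ` (`integ`), and let `B` be multiplication by `β(x)`
(`SHSObj.B`). Then `f` lies in `ker D_β` with `ev_λ f = u` iff `f = u + T f` for `T = -I_λ ∘ B`.
Each `β^{ab}` lowers the first index of the grading by at least one and only finitely many pieces
`V^{pq}` are nonzero, so `T` is nilpotent (`SHSObj.isNilpotent_T`). Hence `f = ∑ Tᵏ u` is the unique
solution, which gives the bijectivity of `ev_λ` (`ev_injective`, `exists_solution`).

If `u ∈ V^{pq}` and `W` is the span of the strictly lower pieces, then `B` maps polynomials with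
coefficients in `V^{pq} + W` to polynomials with coefficients in `W`; so the solution with initial
value `u` at `i` is `u` plus a polynomial with coefficients in `W`, and `d u - u ∈ W`.

Finally `σ ∘ β^{ab} ∘ σ = β^{ba}` says that coefficientwise conjugation `f ↦ f̄` commutes with
`D_β` (`SHSObj.Dbeta_conjPoly`). As `ev_λ f̄ = σ (ev_{λ̄} f)`, conjugation exchanges the values at
`i` and `-i` of solutions, so `σ ∘ d ∘ σ` sends `ev_{-i} f` back to `ev_i f`.
-/


/-!
# STATEMENT 11

Let `(V, β)` be an object of SHS, with `D_β` acting on `V_ℂ ⊗ ℂ[x]`, and for `λ ∈ ℂ`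
let `ev_λ : ker D_β → V_ℂ` denote evaluation at `λ`; each `ev_λ` is a `ℂ`-linear
isomorphism.  Then the automorphism `d := ev_{−i} ∘ (ev_i)⁻¹` of `V_ℂ` satisfies
`σ ∘ d ∘ σ = d⁻¹` and `(d − id)(V^{pq}) ⊆ ⊕_{r<p,s<q} V^{rs}`; that is, `(V, d)` is an
`𝔐`-representation in Deligne's sense.

Conventions: the complexification of `V` is `ℂ ⊗[ℝ] V` with conjugation `σ` acting on
the first factor; `V_ℂ ⊗ ℂ[x]` is modelled as `ℕ →₀ (ℂ ⊗[ℝ] V)`;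
`D_β f = df/dx + β(x)·f` with `β(x) = Σ_{a,b} β^{ab}(x−i)^a(x+i)^b`.
The automorphism `d` is recorded through the relation `d (ev_i f) = ev_{−i} f` for all
`f ∈ ker D_β` (which determines it, `ev_i` being bijective).
-/

noncomputable section

open TensorProduct DirectSum Polynomial

variable (V : Type) [AddCommGroup V] [Module ℝ V]

/-- Complex conjugation on `ℂ ⊗[ℝ] V` (as a real-linear map). -/
def sigmaR : (ℂ ⊗[ℝ] V) →ₗ[ℝ] (ℂ ⊗[ℝ] V) :=
  LinearMap.rTensor V Complex.conjAe.toLinearMap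

variable {V}

section PolynomialSide

variable (U : Type) [AddCommGroup U] [Module ℂ U]

/-- Differentiation `d/dx` on `U ⊗ ℂ[x] = ℕ →₀ U`. -/
def derivMap : (ℕ →₀ U) →ₗ[ℂ] (ℕ →₀ U) :=
  Finsupp.lsum ℂ fun n => (n : ℂ) • Finsupp.lsingle (n - 1)

/-- "Multiply by the polynomial `q(x)` and apply `g` to coefficients". -/
def polyOp (q : Polynomial ℂ) (g : U →ₗ[ℂ] U) : (ℕ →₀ U) →ₗ[ℂ] (ℕ →₀ U) :=
  Finsupp.lsum ℂ fun n => q.sum fun k c => (Finsupp.lsingle (n + k)) ∘ₗ (c • g)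

/-- Evaluation at `λ ∈ ℂ` of a polynomial with coefficients in `U`. -/
def evMap (lam : ℂ) : (ℕ →₀ U) →ₗ[ℂ] U :=
  Finsupp.lsum ℂ fun n => (lam ^ n) • LinearMap.id

end PolynomialSide

/-- The subspace `⊕_{r < p, s < q} V^{rs}`. -/
def strictlyLower (grading : ℤ × ℤ → Submodule ℂ (ℂ ⊗[ℝ] V)) (p q : ℤ) :
    Submodule ℂ (ℂ ⊗[ℝ] V) :=
  ⨆ (r : ℤ) (_ : r < p) (s : ℤ) (_ : s < q), grading (r, s)

/-- An object of the category `SHS`. -/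
structure SHSObj where
  V : Type
  [acg : AddCommGroup V]
  [mod : Module ℝ V]
  findim : FiniteDimensional ℝ V
  grading : ℤ × ℤ → Submodule ℂ (ℂ ⊗[ℝ] V)
  internal : DirectSum.IsInternal grading
  conj_grading : ∀ p q : ℤ, ∀ x ∈ grading (p, q), sigmaR V x ∈ grading (q, p)
  β : ℕ × ℕ → ((ℂ ⊗[ℝ] V) →ₗ[ℂ] (ℂ ⊗[ℝ] V))
  β_fin : (Function.support β).Finite
  β_deg : ∀ (a b : ℕ) (p q : ℤ), ∀ x ∈ grading (p, q),
    β (a, b) x ∈ grading (p - a - 1, q - b - 1)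
  β_conj : ∀ (a b : ℕ) (x : ℂ ⊗[ℝ] V), sigmaR V (β (a, b) (sigmaR V x)) = β (b, a) x

attribute [instance] SHSObj.acg SHSObj.mod

/-- The operator `D_β f = df/dx + β(x)·f` on `V_ℂ ⊗ ℂ[x]`. -/
def SHSObj.Dbeta (A : SHSObj) : (ℕ →₀ (ℂ ⊗[ℝ] A.V)) →ₗ[ℂ] (ℕ →₀ (ℂ ⊗[ℝ] A.V)) :=
  derivMap _ + ∑ ab ∈ A.β_fin.toFinset,
    polyOp _ ((X - C Complex.I) ^ ab.1 * (X + C Complex.I) ^ ab.2) (A.β ab)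

/-! ### Linear differential equations with polynomial solutions -/

section PolynomialLemmas

variable {U : Type} [AddCommGroup U] [Module ℂ U]

lemma derivMap_single (n : ℕ) (u : U) :
    derivMap U (Finsupp.single n u) = (n : ℂ) • Finsupp.single (n - 1) u := by
  simp [derivMap]

lemma polyOp_single (q : Polynomial ℂ) (g : U →ₗ[ℂ] U) (n : ℕ) (u : U) :
    polyOp U q g (Finsupp.single n u) = q.sum fun k c => Finsupp.single (n + k) (c • g u) := by
  simp [polyOp, Polynomial.sum_def]

lemma evMap_single (lam : ℂ) (n : ℕ) (u : U) :
    evMap U lam (Finsupp.single n u) = lam ^ n • u := by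
  simp [evMap]

variable (U) in
/-- Integration from `lam` to `x` on `U ⊗ ℂ[x]`, i.e. the primitive vanishing at `lam`. -/
def integ (lam : ℂ) : (ℕ →₀ U) →ₗ[ℂ] (ℕ →₀ U) :=
  Finsupp.lsum ℂ fun n => ((n : ℂ) + 1)⁻¹ •
    (Finsupp.lsingle (n + 1) - lam ^ (n + 1) • Finsupp.lsingle 0)

lemma integ_single (lam : ℂ) (n : ℕ) (u : U) :
    integ U lam (Finsupp.single n u) = ((n : ℂ) + 1)⁻¹ •
      (Finsupp.single (n + 1) u - lam ^ (n + 1) • Finsupp.single 0 u) := by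
  simp [integ]

lemma derivMap_integ (lam : ℂ) (f : ℕ →₀ U) : derivMap U (integ U lam f) = f := by
  induction f using Finsupp.induction_linear with
  | zero => simp
  | add f g hf hg => simp [hf, hg]
  | single n u =>
    have h : (n : ℂ) + 1 ≠ 0 := Nat.cast_add_one_ne_zero n
    rw [integ_single, map_smul, map_sub, map_smul, derivMap_single, derivMap_single]
    simp only [Nat.cast_zero, zero_smul, smul_zero, sub_zero, Nat.cast_add, Nat.cast_one,
      Nat.add_sub_cancel]
    rw [smul_smul, inv_mul_cancel₀ h, one_smul]

lemma evMap_integ (lam : ℂ) (f : ℕ →₀ U) : evMap U lam (integ U lam f) = 0 := by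
  induction f using Finsupp.induction_linear with
  | zero => simp
  | add f g hf hg => simp [hf, hg]
  | single n u => simp [integ_single, evMap_single]

lemma integ_derivMap (lam : ℂ) (f : ℕ →₀ U) :
    integ U lam (derivMap U f) = f - Finsupp.single 0 (evMap U lam f) := by
  induction f using Finsupp.induction_linear with
  | zero => simp
  | add f g hf hg => simp only [map_add, hf, hg, Finsupp.single_add]; abel
  | single n u =>
    rw [derivMap_single, map_smul, evMap_single]
    cases n with
    | zero => simp
    | succ n =>
      have h : (n : ℂ) + 1 ≠ 0 := Nat.cast_add_one_ne_zero n
      rw [Nat.add_sub_cancel, integ_single, smul_smul, Nat.cast_add, Nat.cast_one,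
        mul_inv_cancel₀ h, one_smul, Finsupp.smul_single]

/-- Polynomials all of whose coefficients lie in `W`. -/
def polyIn (W : Submodule ℂ U) : Submodule ℂ (ℕ →₀ U) where
  carrier := {f | ∀ n, f n ∈ W}
  add_mem' hf hg n := W.add_mem (hf n) (hg n)
  zero_mem' _ := W.zero_mem
  smul_mem' c _ hf n := W.smul_mem c (hf n)

lemma single_mem_polyIn {W : Submodule ℂ U} {u : U} (hu : u ∈ W) (n : ℕ) :
    Finsupp.single n u ∈ polyIn W := by
  intro m
  rw [Finsupp.single_apply]
  split_ifs
  · exact hu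
  · exact W.zero_mem

/-- It suffices to check a mapping property out of `polyIn W` on monomials. -/
lemma map_mem_of_single {M : Type} [AddCommGroup M] [Module ℂ M] {W : Submodule ℂ U}
    {S : Submodule ℂ M} (L : (ℕ →₀ U) →ₗ[ℂ] M)
    (h : ∀ n, ∀ u ∈ W, L (Finsupp.single n u) ∈ S) {f : ℕ →₀ U} (hf : f ∈ polyIn W) :
    L f ∈ S := by
  rw [← Finsupp.sum_single f, Finsupp.sum, map_sum]
  exact S.sum_mem fun n _ => h n _ (hf n)

lemma integ_mem {W : Submodule ℂ U} (lam : ℂ) {f : ℕ →₀ U} (hf : f ∈ polyIn W) :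
    integ U lam f ∈ polyIn W := by
  refine map_mem_of_single _ (fun n u hu => ?_) hf
  rw [integ_single]
  exact Submodule.smul_mem _ _ (Submodule.sub_mem _ (single_mem_polyIn hu _)
    (Submodule.smul_mem _ _ (single_mem_polyIn hu _)))

lemma evMap_mem {W : Submodule ℂ U} (lam : ℂ) {f : ℕ →₀ U} (hf : f ∈ polyIn W) :
    evMap U lam f ∈ W := by
  refine map_mem_of_single _ (fun n u hu => ?_) hf
  rw [evMap_single]
  exact W.smul_mem _ hu

lemma polyOp_mem {W W' : Submodule ℂ U} (q : Polynomial ℂ) {g : U →ₗ[ℂ] U}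
    (hg : ∀ u ∈ W, g u ∈ W') {f : ℕ →₀ U} (hf : f ∈ polyIn W) :
    polyOp U q g f ∈ polyIn W' := by
  refine map_mem_of_single _ (fun n u hu => ?_) hf
  rw [polyOp_single, Polynomial.sum_def]
  exact Submodule.sum_mem _ fun k _ => single_mem_polyIn (W'.smul_mem _ (hg u hu)) _

/-- A solution of `f' + B f = 0` with `f(lam) = 0` is a fixed point of the nilpotent operator
`-∫ B`, hence zero. -/
lemma ev_injective (B : (ℕ →₀ U) →ₗ[ℂ] (ℕ →₀ U)) (lam : ℂ)
    (hT : IsNilpotent (-(integ U lam ∘ₗ B) : Module.End ℂ (ℕ →₀ U)))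
    {f : ℕ →₀ U} (hf : derivMap U f + B f = 0) (h0 : evMap U lam f = 0) : f = 0 := by
  have h1 : (-(integ U lam ∘ₗ B) : Module.End ℂ (ℕ →₀ U)) f = f := by
    have h2 := congrArg (integ U lam) hf
    rw [map_add, integ_derivMap, h0, Finsupp.single_zero, sub_zero, map_zero] at h2
    simpa using (eq_neg_of_add_eq_zero_left h2).symm
  obtain ⟨k, hk⟩ := hT
  have h2 : ∀ j : ℕ, ((-(integ U lam ∘ₗ B) : Module.End ℂ (ℕ →₀ U)) ^ j) f = f := by
    intro j
    induction j with
    | zero => simp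
    | succ j ih => rw [pow_succ, Module.End.mul_apply, h1, ih]
  rw [← h2 k, hk, LinearMap.zero_apply]

/-- The finite Picard series solves `f' + B f = 0`, `f(lam) = u`; its coefficients stay in any
subspace that contains `u` and is stable under `B`. -/
lemma exists_solution (B : (ℕ →₀ U) →ₗ[ℂ] (ℕ →₀ U)) (lam : ℂ)
    (hT : IsNilpotent (-(integ U lam ∘ₗ B) : Module.End ℂ (ℕ →₀ U))) (u : U)
    (W : Submodule ℂ U) (hu : u ∈ W) (hB : ∀ f ∈ polyIn W, B f ∈ polyIn W) :
    ∃ f : ℕ →₀ U, derivMap U f + B f = 0 ∧ evMap U lam f = u ∧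
      f = Finsupp.single 0 u - integ U lam (B f) ∧ f ∈ polyIn W := by
  obtain ⟨k, hk⟩ := hT
  set T : Module.End ℂ (ℕ →₀ U) := -(integ U lam ∘ₗ B) with hTdef
  set c : ℕ →₀ U := Finsupp.single 0 u with hc
  set f : ℕ →₀ U := (∑ j ∈ Finset.range k, T ^ j) c with hfdef
  have hfix : f = c - integ U lam (B f) := by
    have h1 := congrArg (fun L : Module.End ℂ (ℕ →₀ U) => L c) (mul_neg_geom_sum T k)
    simp only [hk, Module.End.mul_apply, LinearMap.sub_apply, Module.End.one_apply,
      sub_zero, ← hfdef] at h1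
    rw [← h1]
    simp [hTdef]
  have hmem : ∀ j : ℕ, (T ^ j) c ∈ polyIn W := by
    intro j
    induction j with
    | zero => simpa using single_mem_polyIn hu 0
    | succ j ih =>
      rw [pow_succ', Module.End.mul_apply]
      simpa [hTdef] using integ_mem lam (hB _ ih)
  refine ⟨f, ?_, ?_, hfix, ?_⟩
  · have h1 := congrArg (derivMap U) hfix
    rw [map_sub, derivMap_integ, hc, derivMap_single] at h1
    rw [h1]
    simp
  · rw [hfix, map_sub, evMap_integ, hc, evMap_single]
    simp
  · rw [hfdef, LinearMap.sum_apply]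
    exact Submodule.sum_mem _ fun j _ => hmem j

end PolynomialLemmas

/-! ### Complex conjugation -/

section Conjugation

lemma sigmaR_smul (c : ℂ) (x : ℂ ⊗[ℝ] V) :
    sigmaR V (c • x) = (starRingEnd ℂ c) • sigmaR V x := by
  induction x using TensorProduct.induction_on with
  | zero => simp
  | tmul z v => simp [sigmaR, TensorProduct.smul_tmul']
  | add x y hx hy => simp [hx, hy]

lemma sigmaR_sigmaR (x : ℂ ⊗[ℝ] V) : sigmaR V (sigmaR V x) = x := by
  induction x using TensorProduct.induction_on with
  | zero => simp
  | tmul z v => simp [sigmaR]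
  | add x y hx hy => simp [hx, hy]

variable (V) in
/-- Coefficientwise conjugation `f ↦ f̄` on `V_ℂ ⊗ ℂ[x]`. -/
def conjPoly : (ℕ →₀ (ℂ ⊗[ℝ] V)) →ₗ[ℝ] (ℕ →₀ (ℂ ⊗[ℝ] V)) :=
  Finsupp.mapRange.linearMap (sigmaR V)

lemma conjPoly_single (n : ℕ) (u : ℂ ⊗[ℝ] V) :
    conjPoly V (Finsupp.single n u) = Finsupp.single n (sigmaR V u) := by
  simp [conjPoly]

lemma evMap_conjPoly (lam : ℂ) (f : ℕ →₀ (ℂ ⊗[ℝ] V)) :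
    evMap _ lam (conjPoly V f) = sigmaR V (evMap _ (starRingEnd ℂ lam) f) := by
  induction f using Finsupp.induction_linear with
  | zero => simp
  | add f g hf hg => simp only [map_add, hf, hg]
  | single n u => simp [conjPoly_single, evMap_single, sigmaR_smul]

lemma derivMap_conjPoly (f : ℕ →₀ (ℂ ⊗[ℝ] V)) :
    derivMap _ (conjPoly V f) = conjPoly V (derivMap _ f) := by
  induction f using Finsupp.induction_linear with
  | zero => simp
  | add f g hf hg => simp only [map_add, hf, hg]
  | single n u =>
    rw [conjPoly_single, derivMap_single, derivMap_single, Finsupp.smul_single,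
      Finsupp.smul_single, conjPoly_single, sigmaR_smul, Complex.conj_natCast]

lemma polyOp_conjPoly (q : Polynomial ℂ) (g h : (ℂ ⊗[ℝ] V) →ₗ[ℂ] (ℂ ⊗[ℝ] V))
    (hgh : ∀ x, sigmaR V (g (sigmaR V x)) = h x) (f : ℕ →₀ (ℂ ⊗[ℝ] V)) :
    polyOp _ q g (conjPoly V f) = conjPoly V (polyOp _ (q.map (starRingEnd ℂ)) h f) := by
  induction f using Finsupp.induction_linear with
  | zero => simp
  | add f g hf hg => simp only [map_add, hf, hg]
  | single n u =>
    rw [conjPoly_single, polyOp_single, polyOp_single, Polynomial.sum_def, Polynomial.sum_def,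
      Polynomial.support_map_of_injective _ (starRingEnd ℂ).injective, map_sum]
    refine Finset.sum_congr rfl fun k _ => ?_
    rw [conjPoly_single, sigmaR_smul, Polynomial.coeff_map, Complex.conj_conj, ← hgh,
      sigmaR_sigmaR]

end Conjugation

/-! ### The operator `β(x)` and the grading -/

namespace SHSObj

variable (A : SHSObj)

/-- Multiplication by `β(x)` on `V_ℂ ⊗ ℂ[x]`. -/
def B : (ℕ →₀ (ℂ ⊗[ℝ] A.V)) →ₗ[ℂ] (ℕ →₀ (ℂ ⊗[ℝ] A.V)) :=
  ∑ ab ∈ A.β_fin.toFinset,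
    polyOp _ ((X - C Complex.I) ^ ab.1 * (X + C Complex.I) ^ ab.2) (A.β ab)

lemma Dbeta_apply (f : ℕ →₀ (ℂ ⊗[ℝ] A.V)) : A.Dbeta f = derivMap _ f + A.B f := rfl

lemma B_mem {W W' : Submodule ℂ (ℂ ⊗[ℝ] A.V)} (h : ∀ ab, ∀ u ∈ W, A.β ab u ∈ W')
    {f : ℕ →₀ (ℂ ⊗[ℝ] A.V)} (hf : f ∈ polyIn W) : A.B f ∈ polyIn W' := by
  rw [B, LinearMap.sum_apply]
  exact Submodule.sum_mem _ fun ab _ => polyOp_mem _ (h ab) hf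

lemma β_swap_ne_zero {ab : ℕ × ℕ} (h : A.β ab ≠ 0) : A.β ab.swap ≠ 0 := by
  contrapose! h
  ext x
  have := A.β_conj ab.2 ab.1 (1 ⊗ₜ x)
  change sigmaR A.V (A.β ab.swap _) = A.β ab _ at this
  rw [h] at this
  simpa using this.symm

lemma B_conjPoly (f : ℕ →₀ (ℂ ⊗[ℝ] A.V)) : A.B (conjPoly A.V f) = conjPoly A.V (A.B f) := by
  rw [B, LinearMap.sum_apply, LinearMap.sum_apply, map_sum]
  refine Finset.sum_equiv (Equiv.prodComm ℕ ℕ) (fun ab => ?_) (fun ab _ => ?_)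
  · simp only [Set.Finite.mem_toFinset, Function.mem_support, Equiv.prodComm_apply]
    exact ⟨A.β_swap_ne_zero, fun h => by simpa using A.β_swap_ne_zero h⟩
  · rw [polyOp_conjPoly _ _ (A.β ab.swap) (A.β_conj ab.1 ab.2)]
    congr 3
    simp [sub_eq_add_neg, mul_comm]

lemma Dbeta_conjPoly (f : ℕ →₀ (ℂ ⊗[ℝ] A.V)) :
    A.Dbeta (conjPoly A.V f) = conjPoly A.V (A.Dbeta f) := by
  rw [Dbeta_apply, Dbeta_apply, derivMap_conjPoly, B_conjPoly, map_add]

/-- The increasing filtration `F_k = ⊕_{p < k} V^{pq}`. -/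
def filt (k : ℤ) : Submodule ℂ (ℂ ⊗[ℝ] A.V) :=
  ⨆ (pq : ℤ × ℤ) (_ : pq.1 < k), A.grading pq

lemma β_filt (k : ℤ) (ab : ℕ × ℕ) : ∀ u ∈ A.filt k, A.β ab u ∈ A.filt (k - 1) := by
  suffices h : A.filt k ≤ (A.filt (k - 1)).comap (A.β ab) from fun u hu => h hu
  refine iSup₂_le fun pq hpq u hu => ?_
  have h1 : pq.1 - ab.1 - 1 < k - 1 := by omega
  exact (le_iSup₂_of_le (f := fun (pq : ℤ × ℤ) (_ : pq.1 < k - 1) => A.grading pq)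
    (pq.1 - ab.1 - 1, pq.2 - ab.2 - 1) h1 le_rfl) (A.β_deg ab.1 ab.2 pq.1 pq.2 u hu)

/-- Only finitely many pieces of the grading are nonzero, so the filtration is exhaustive and
separated in finitely many steps. -/
lemma exists_filt : ∃ (m : ℤ) (n : ℕ), A.filt m = ⊥ ∧ A.filt (m + n) = ⊤ := by
  have := A.findim
  have hfin : {pq | A.grading pq ≠ ⊥}.Finite :=
    WellFoundedGT.finite_ne_bot_of_iSupIndep A.internal.submodule_iSupIndep
  have himg := hfin.image Prod.fst
  obtain ⟨l, hl⟩ := himg.bddBelow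
  obtain ⟨r, hr⟩ := himg.bddAbove
  have hbounds : ∀ pq, A.grading pq ≠ ⊥ → l ≤ pq.1 ∧ pq.1 ≤ r := fun pq h =>
    ⟨hl ⟨pq, h, rfl⟩, hr ⟨pq, h, rfl⟩⟩
  refine ⟨l, (r + 1 - l).toNat, ?_, ?_⟩
  · refine le_bot_iff.1 (iSup₂_le fun pq hpq => ?_)
    by_contra h
    have := (hbounds pq fun h' => h h'.le).1
    omega
  · rw [eq_top_iff, ← A.internal.submodule_iSup_eq_top]
    refine iSup_le fun pq => ?_
    by_cases h : A.grading pq = ⊥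
    · rw [h]; exact bot_le
    · have := hbounds pq h
      exact le_iSup₂_of_le (f := fun (pq : ℤ × ℤ) (_ : pq.1 < _) => A.grading pq) pq
        (by omega) le_rfl

lemma isNilpotent_T (lam : ℂ) :
    IsNilpotent (-(integ _ lam ∘ₗ A.B) : Module.End ℂ (ℕ →₀ (ℂ ⊗[ℝ] A.V))) := by
  obtain ⟨m, n, hm, hn⟩ := A.exists_filt
  refine ⟨n, LinearMap.ext fun f => ?_⟩
  have key : ∀ j : ℕ, ((-(integ _ lam ∘ₗ A.B) : Module.End ℂ (ℕ →₀ (ℂ ⊗[ℝ] A.V))) ^ j) f ∈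
      polyIn (A.filt (m + n - j)) := by
    intro j
    induction j with
    | zero =>
      intro i
      simp [hn]
    | succ j ih =>
      rw [pow_succ', Module.End.mul_apply]
      have h1 := integ_mem lam (A.B_mem (A.β_filt _) ih)
      rw [show m + n - ((j + 1 : ℕ) : ℤ) = m + n - j - 1 by push_cast; ring]
      simpa using h1
  have h2 := key n
  rw [add_sub_cancel_right, hm] at h2
  ext i
  simpa using h2 i

lemma grading_le_strictlyLower {p q r s : ℤ} (hr : r < p) (hs : s < q) :
    A.grading (r, s) ≤ strictlyLower A.grading p q :=
  le_iSup_of_le r (le_iSup_of_le hr (le_iSup_of_le s (le_iSup_of_le hs le_rfl)))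

lemma β_strictlyLower (p q : ℤ) (ab : ℕ × ℕ) :
    ∀ u ∈ A.grading (p, q) ⊔ strictlyLower A.grading p q,
      A.β ab u ∈ strictlyLower A.grading p q := by
  suffices h : A.grading (p, q) ⊔ strictlyLower A.grading p q ≤
      (strictlyLower A.grading p q).comap (A.β ab) from fun u hu => h hu
  refine sup_le (fun u hu => ?_) (iSup_le fun r => iSup_le fun hr => iSup_le fun s =>
    iSup_le fun hs u hu => ?_)
  · exact A.grading_le_strictlyLower (by omega) (by omega) (A.β_deg ab.1 ab.2 p q u hu)
  · exact A.grading_le_strictlyLower (by omega) (by omega) (A.β_deg ab.1 ab.2 r s u hu)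

end SHSObj

theorem SHS_gives_M_representation (A : SHSObj) :
    -- each evaluation map `ev_λ : ker D_β → V_ℂ` is a `ℂ`-linear isomorphism:
    (∀ lam : ℂ,
      Function.Bijective ((evMap _ lam) ∘ₗ (LinearMap.ker A.Dbeta).subtype)) ∧
    -- and `d := ev_{−i} ∘ (ev_i)⁻¹` makes `(V, d)` an `𝔐`-representation:
    ∀ d : (ℂ ⊗[ℝ] A.V) →ₗ[ℂ] (ℂ ⊗[ℝ] A.V),
      (∀ f : ℕ →₀ (ℂ ⊗[ℝ] A.V), A.Dbeta f = 0 →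
        d (evMap _ Complex.I f) = evMap _ (-Complex.I) f) →
      -- `σ ∘ d ∘ σ` is a two-sided inverse of `d`, i.e. `σ∘d∘σ = d⁻¹`:
      (∀ x : ℂ ⊗[ℝ] A.V,
        d (sigmaR A.V (d (sigmaR A.V x))) = x ∧
        sigmaR A.V (d (sigmaR A.V (d x))) = x) ∧
      -- `(d − id)(V^{pq}) ⊆ ⊕_{r<p,s<q} V^{rs}`:
      (∀ p q : ℤ, ∀ x ∈ A.grading (p, q),
        d x - x ∈ strictlyLower A.grading p q) := by
  have hsol : ∀ lam : ℂ, ∀ u, ∃ f, A.Dbeta f = 0 ∧ evMap _ lam f = u := by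
    intro lam u
    obtain ⟨f, h1, h2, -, -⟩ := exists_solution A.B lam (A.isNilpotent_T lam) u ⊤ trivial
      (fun _ _ _ => trivial)
    exact ⟨f, h1, h2⟩
  refine ⟨fun lam => ⟨?_, fun u => ?_⟩, fun d hd => ⟨fun x => ?_, fun p q x hx => ?_⟩⟩
  · rw [injective_iff_map_eq_zero]
    rintro ⟨f, hf⟩ h0
    exact Subtype.ext (ev_injective A.B lam (A.isNilpotent_T lam) hf h0)
  · obtain ⟨f, h1, h2⟩ := hsol lam u
    exact ⟨⟨f, h1⟩, h2⟩
  · -- The conjugate of a solution is a solution with the values at `±i` exchanged.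
    have hconj : ∀ f, A.Dbeta f = 0 →
        d (sigmaR A.V (evMap _ (-Complex.I) f)) = sigmaR A.V (evMap _ Complex.I f) := by
      intro f hf
      have h1 := hd (conjPoly A.V f) (by rw [A.Dbeta_conjPoly, hf, map_zero])
      simpa [evMap_conjPoly] using h1
    constructor
    · obtain ⟨f, h1, h2⟩ := hsol (-Complex.I) x
      rw [← h2, hconj f h1, sigmaR_sigmaR, hd f h1]
    · obtain ⟨f, h1, h2⟩ := hsol Complex.I x
      rw [← h2, hd f h1, hconj f h1, sigmaR_sigmaR]
  · obtain ⟨f, h1, h2, h3, h4⟩ := exists_solution A.B Complex.I (A.isNilpotent_T _) x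
      (A.grading (p, q) ⊔ strictlyLower A.grading p q) (le_sup_left (a := A.grading (p, q)) hx)
      (fun f hf => A.B_mem (fun ab u hu => le_sup_right (a := A.grading (p, q))
        (A.β_strictlyLower p q ab u hu)) hf)
    have h5 : d x = x - evMap _ (-Complex.I) (integ _ Complex.I (A.B f)) := by
      rw [← h2, hd f h1, h2]
      conv_lhs => rw [h3]
      simp [evMap_single]
    rw [h5, sub_sub_cancel_left]
    exact Submodule.neg_mem _ (evMap_mem _ (integ_mem _ (A.B_mem (A.β_strictlyLower p q) h4)))

end
end
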